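/- (Proposition 3, decision-set disclosure.) Fix an integer K ≥ 2, reals ε_e > 0, Δ ≥ 0, ε_a with Δ/(1+Δ) < ε_a < 1, a threshold q ∈ (0,1), and a temperature T > 0. Define γ^out, γ^in as in the parameterization below and let μ^out, μ^in be the probability measures on S_K with densities f_{γ^out}, f_{γ^in}. Define the output distributions on {0,1}^K by ν^z(b) = ∫_{S_K} κ_{T,q}(p)(b) f_{γ^z}(p) dp for z ∈ {out, in}. Then for every subset B ⊆ {0,1}^K, ν^out(B) − ν^in(B) ≤ δ_{T,q} · Adv^CV-ub(Δ, ε_a, ε_e, K). -/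

import Mathlib

open MeasureTheory

/-- The open standard simplex `S_K` in coordinates `(p_0, …, p_{K-2}) ∈ ℝ^{K-1}`:
all coordinates positive and their sum less than 1 (so that `p_{K-1} = 1 - Σ` is positive). -/
def simplexCoords (K : ℕ) : Set (Fin (K - 1) → ℝ) :=
  {x | (∀ i, 0 < x i) ∧ ∑ i, x i < 1}

/-- The full probability vector `p ∈ ℝ^K` obtained from the coordinates
`(p_0, …, p_{K-2})`, with `p_{K-1} = 1 - Σ_{k < K-1} p_k`. -/
noncomputable def fullProb (K : ℕ) (x : Fin (K - 1) → ℝ) : Fin K → ℝ :=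
  fun k => if h : (k : ℕ) < K - 1 then x ⟨k, h⟩ else 1 - ∑ i, x i

/-- Multivariate Beta function `B(γ) = (∏ₖ Γ(γₖ)) / Γ(Σₖ γₖ)`. -/
noncomputable def multiBeta {K : ℕ} (γ : Fin K → ℝ) : ℝ :=
  (∏ i, Real.Gamma (γ i)) / Real.Gamma (∑ i, γ i)

/-- Dirichlet density `f_γ(p) = (1/B(γ)) ∏ₖ pₖ^(γₖ - 1)` in simplex coordinates. -/
noncomputable def dirichletPdf {K : ℕ} (γ : Fin K → ℝ) (x : Fin (K - 1) → ℝ) : ℝ :=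
  (1 / multiBeta γ) * ∏ k, (fullProb K x k) ^ (γ k - 1)

/-- Digamma function `ψ(x) = Γ'(x)/Γ(x)`. -/
noncomputable def digamma (x : ℝ) : ℝ := deriv Real.Gamma x / Real.Gamma x

/-- Dirichlet parameters for the model trained *without* the target point. -/
noncomputable def gammaOut (K : ℕ) (epsE epsA : ℝ) : Fin K → ℝ := fun k =>
  if (k : ℕ) = 0 then (1 - epsA) / epsE else epsA / (((K : ℝ) - 1) * epsE)

/-- Dirichlet parameters for the model trained *with* the target point. -/
noncomputable def gammaIn (K : ℕ) (epsE Δ epsA : ℝ) : Fin K → ℝ := fun k =>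
  if (k : ℕ) = 0 then (1 + Δ) * (1 - epsA) / epsE
  else (epsA * (1 + Δ) - Δ) / (((K : ℝ) - 1) * epsE)

/-- The upper bound on the attacker's advantage under confidence-vector disclosure. -/
noncomputable def AdvCVub (Δ epsA epsE : ℝ) (K : ℕ) : ℝ :=
  Real.sqrt ((Δ * (1 - epsA) / epsE) *
    (digamma ((1 + Δ) * (1 - epsA) / epsE) - digamma ((1 - epsA) / epsE)
      + digamma (epsA / (((K : ℝ) - 1) * epsE))
      - digamma ((epsA * (1 + Δ) - Δ) / (((K : ℝ) - 1) * epsE))))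

/-- Tempered sigmoid `σ_T(x) = 1/(1 + e^{-x/T})`. -/
noncomputable def sigmaT (T x : ℝ) : ℝ := 1 / (1 + Real.exp (-x / T))

/-- Randomized decision-set channel: the probability of producing the bit vector
`b ∈ {0,1}^K` given the confidence vector `p`:
`κ_{T,q}(p)(b) = ∏ₖ σ_T((2 bₖ - 1)(pₖ - q))`. -/
noncomputable def dsKernel (K : ℕ) (T q : ℝ) (p : Fin K → ℝ) (b : Fin K → Bool) : ℝ :=
  ∏ k, sigmaT T ((2 * (if b k then (1 : ℝ) else 0) - 1) * (p k - q))

/-- The open standard simplex of full probability vectors in `ℝ^K`. -/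
def probSimplex (K : ℕ) : Set (Fin K → ℝ) :=
  {p | (∀ k, 0 < p k) ∧ ∑ k, p k = 1}

/-- Squared proportionality factor `δ_{T,q}²`: the Dobrushin coefficient of the
randomized decision-set channel over the simplex. -/
noncomputable def deltaSq (K : ℕ) (T q : ℝ) : ℝ :=
  ⨆ (p : probSimplex K) (p' : probSimplex K),
    1 / 2 * ∑ b : Fin K → Bool, |dsKernel K T q p b - dsKernel K T q p' b|


/-- Unnormalized Dirichlet weight on the scaled simplex. -/
noncomputable def dirW (n : ℕ) (a : Fin n → ℝ) (b s : ℝ) (x : Fin n → ℝ) : ℝ :=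
  open Classical in
  if (∀ i, 0 < x i) ∧ ∑ i, x i < s then (∏ i, x i ^ (a i - 1)) * (s - ∑ i, x i) ^ (b - 1) else 0

theorem dirSet_meas (n : ℕ) (s : ℝ) :
    MeasurableSet {x : Fin n → ℝ | (∀ i, 0 < x i) ∧ ∑ i, x i < s} := by
  apply MeasurableSet.inter
  · have : {x : Fin n → ℝ | ∀ i, 0 < x i} = ⋂ i, {x | 0 < x i} := by ext; simp
    change MeasurableSet {x : Fin n → ℝ | ∀ i, 0 < x i}
    rw [this]
    exact MeasurableSet.iInter fun i => measurableSet_lt measurable_const (measurable_pi_apply i)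
  · exact measurableSet_lt (Finset.measurable_sum _ fun i _ => measurable_pi_apply i)
      measurable_const

theorem dirW_meas (n : ℕ) (a : Fin n → ℝ) (b s : ℝ) : Measurable (dirW n a b s) := by
  unfold dirW
  exact Measurable.ite (dirSet_meas n s) (by fun_prop) measurable_const

theorem beta_scaled (a c s : ℝ) (ha : 0 < a) (hc : 0 < c) (hs : 0 < s) :
    ∫⁻ t : ℝ, ENNReal.ofReal (if 0 < t ∧ t < s then t ^ (a - 1) * (s - t) ^ (c - 1) else 0)
      = ENNReal.ofReal (s ^ (a + c - 1) * (Real.Gamma a * Real.Gamma c / Real.Gamma (a + c))) := by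
  have hB := ProbabilityTheory.beta_pos ha hc
  have h1 := ProbabilityTheory.lintegral_betaPDF_eq_one ha hc
  have hm : Measurable (fun t : ℝ => ENNReal.ofReal
      (if 0 < t ∧ t < s then t ^ (a - 1) * (s - t) ^ (c - 1) else 0)) := by
    refine Measurable.ennreal_ofReal (Measurable.ite measurableSet_Ioo (by fun_prop) (by fun_prop))
  rw [← Real.smul_map_volume_mul_left hs.ne', lintegral_smul_measure,
    lintegral_map hm (by fun_prop)]
  have : ∀ u : ℝ, ENNReal.ofReal
      (if 0 < s * u ∧ s * u < s then (s * u) ^ (a - 1) * (s - s * u) ^ (c - 1) else 0)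
      = ENNReal.ofReal (s ^ (a + c - 2) * ProbabilityTheory.beta a c)
        * ProbabilityTheory.betaPDF a c u := by
    intro u
    rw [ProbabilityTheory.betaPDF_eq, ← ENNReal.ofReal_mul (by positivity)]
    congr 1
    have e : (0 < s * u ∧ s * u < s) ↔ (0 < u ∧ u < 1) := by
      rw [mul_pos_iff_of_pos_left hs, mul_lt_iff_lt_one_right hs]
    by_cases h : 0 < u ∧ u < 1
    · rw [if_pos h, if_pos (e.2 h), show s - s * u = s * (1 - u) by ring,
        Real.mul_rpow hs.le h.1.le, Real.mul_rpow hs.le (by linarith [h.2]),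
        show a + c - 2 = (a - 1) + (c - 1) by ring, Real.rpow_add hs]
      field_simp
    · rw [if_neg h, if_neg (fun h' => h (e.1 h')), mul_zero]
  simp_rw [this]
  rw [lintegral_const_mul' _ _ ENNReal.ofReal_ne_top, h1, mul_one, smul_eq_mul,
    ← ENNReal.ofReal_mul (abs_nonneg _), abs_of_pos hs]
  congr 1
  rw [show a + c - 1 = 1 + (a + c - 2) by ring, Real.rpow_add hs, Real.rpow_one,
    ProbabilityTheory.beta]
  ring

theorem dirW_cons (n : ℕ) (a : Fin (n + 1) → ℝ) (b s t : ℝ) (y : Fin n → ℝ) :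
    dirW (n + 1) a b s (Fin.cons t y : Fin (n + 1) → ℝ)
      = (if 0 < t ∧ t < s then t ^ (a 0 - 1) else 0) * dirW n (fun i => a i.succ) b (s - t) y := by
  unfold dirW
  simp only [Fin.forall_fin_succ, Fin.sum_univ_succ, Fin.prod_univ_succ, Fin.cons_zero,
    Fin.cons_succ]
  by_cases h : (0 < t ∧ ∀ i, 0 < y i) ∧ t + ∑ i, y i < s
  · have hy : 0 ≤ ∑ i, y i := Finset.sum_nonneg fun i _ => (h.1.2 i).le
    rw [if_pos h, if_pos ⟨h.1.1, by linarith [h.2]⟩, if_pos ⟨h.1.2, by linarith [h.2]⟩, ← sub_sub]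
    ring
  · rw [if_neg h]
    by_cases h1 : 0 < t ∧ t < s
    · rw [if_neg (c := (∀ i, 0 < y i) ∧ _), mul_zero]
      rintro ⟨h2, h3⟩
      exact h ⟨⟨h1.1, h2⟩, by linarith⟩
    · rw [if_neg h1, zero_mul]

theorem dirW_nonneg (n : ℕ) (a : Fin n → ℝ) (b s : ℝ) (x : Fin n → ℝ) : 0 ≤ dirW n a b s x := by
  unfold dirW
  split_ifs with h
  · exact mul_nonneg (Finset.prod_nonneg fun i _ => Real.rpow_nonneg (h.1 i).le _)
      (Real.rpow_nonneg (by linarith [h.2]) _)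
  · exact le_rfl

theorem dirW_lintegral (n : ℕ) (a : Fin n → ℝ) (b s : ℝ) (ha : ∀ i, 0 < a i) (hb : 0 < b)
    (hs : 0 < s) :
    ∫⁻ x, ENNReal.ofReal (dirW n a b s x) = ENNReal.ofReal (s ^ (∑ i, a i + b - 1) *
      ((∏ i, Real.Gamma (a i)) * Real.Gamma b / Real.Gamma (∑ i, a i + b))) := by
  induction n generalizing s with
  | zero =>
    have := (Real.Gamma_pos_of_pos hb).ne'
    rw [volume_pi, Measure.pi_of_empty, lintegral_dirac]
    simp [dirW, hs, this]
  | succ n ih =>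
    have ih' := fun s hs => ih (fun i => a i.succ) s (fun i => ha _) hs
    set A := ∑ i : Fin n, a i.succ with hA
    have hA0 : 0 ≤ A := Finset.sum_nonneg fun i _ => (ha _).le
    have hc : 0 < A + b := by linarith
    set P := ∏ i : Fin n, Real.Gamma (a i.succ) with hP
    have hP0 : 0 < P := Finset.prod_pos fun i _ => Real.Gamma_pos_of_pos (ha _)
    have hg := Real.Gamma_pos_of_pos hc
    have hgb := Real.Gamma_pos_of_pos hb
    rw [← (volume_preserving_piFinSuccAbove (fun _ : Fin (n+1) => ℝ) 0).symm.lintegral_comp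
      (dirW_meas _ _ _ _).ennreal_ofReal]
    rw [Measure.volume_eq_prod, lintegral_prod _ (by
      exact ((dirW_meas _ _ _ _).comp (MeasurableEquiv.measurable _)).ennreal_ofReal.aemeasurable)]
    have key : ∀ t : ℝ, ∫⁻ y : Fin n → ℝ, ENNReal.ofReal (dirW (n + 1) a b s
        ((MeasurableEquiv.piFinSuccAbove (fun _ : Fin (n+1) => ℝ) 0).symm (t, y)))
        = ENNReal.ofReal (P * Real.Gamma b / Real.Gamma (A + b)) * ENNReal.ofReal
          (if 0 < t ∧ t < s then t ^ (a 0 - 1) * (s - t) ^ (A + b - 1) else 0) := by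
      intro t
      have e : ∀ y : Fin n → ℝ, (MeasurableEquiv.piFinSuccAbove (fun _ : Fin (n+1) => ℝ) 0).symm
        (t, y) = (Fin.cons t y : Fin (n + 1) → ℝ) := by
        intro y
        simp [MeasurableEquiv.piFinSuccAbove, Fin.insertNthEquiv]
      simp_rw [e, dirW_cons]
      by_cases h : 0 < t ∧ t < s
      · simp only [if_pos h]
        have h0 : 0 ≤ t ^ (a 0 - 1) := Real.rpow_nonneg h.1.le _
        simp_rw [ENNReal.ofReal_mul h0]
        rw [lintegral_const_mul' _ _ ENNReal.ofReal_ne_top, ih' _ (by linarith [h.2]),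
          ← ENNReal.ofReal_mul h0, ← ENNReal.ofReal_mul (by positivity), 
          ← ENNReal.ofReal_mul (by positivity)]
        congr 1
        ring
      · simp only [if_neg h]
        simp
    simp_rw [key]
    rw [lintegral_const_mul' _ _ ENNReal.ofReal_ne_top, beta_scaled _ _ _ (ha 0) hc hs,
      ← ENNReal.ofReal_mul (by positivity), Fin.sum_univ_succ, Fin.prod_univ_succ, ← hA, ← hP,
      add_assoc]
    congr 1
    field_simp

theorem simplexCoords_meas (K : ℕ) : MeasurableSet (simplexCoords K) := dirSet_meas _ _

theorem fullProb_mem {K : ℕ} (hK : 2 ≤ K) {x : Fin (K - 1) → ℝ} (hx : x ∈ simplexCoords K) :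
    fullProb K x ∈ probSimplex K := by
  obtain ⟨n, rfl⟩ : ∃ n, K = n + 1 := ⟨K - 1, by omega⟩
  refine ⟨fun k => ?_, ?_⟩
  · unfold fullProb
    split_ifs with h
    · exact hx.1 _
    · linarith [hx.2]
  · rw [Fin.sum_univ_castSucc]
    simp [fullProb]

theorem fullProb_meas (K : ℕ) (k : Fin K) : Measurable (fun x => fullProb K x k) := by
  unfold fullProb
  split_ifs with h
  · exact measurable_pi_apply _
  · exact measurable_const.sub (Finset.measurable_sum _ fun i _ => measurable_pi_apply i)

/-- Unnormalized Dirichlet weight in the coordinates of the statement. -/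
noncomputable def dw {K : ℕ} (γ : Fin K → ℝ) (x : Fin (K - 1) → ℝ) : ℝ :=
  ∏ k, (fullProb K x k) ^ (γ k - 1)

theorem dw_meas {K : ℕ} (γ : Fin K → ℝ) : Measurable (dw γ) := by
  unfold dw
  exact Finset.measurable_prod _ fun k _ => (fullProb_meas K k).pow_const _

theorem multiBeta_pos {K : ℕ} (hK : 2 ≤ K) {γ : Fin K → ℝ} (hγ : ∀ k, 0 < γ k) :
    0 < multiBeta γ := by
  have : Nonempty (Fin K) := ⟨⟨0, by omega⟩⟩
  exact div_pos (Finset.prod_pos fun i _ => Real.Gamma_pos_of_pos (hγ i))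
    (Real.Gamma_pos_of_pos (Finset.sum_pos (fun i _ => hγ i) Finset.univ_nonempty))

theorem dw_pos {K : ℕ} (hK : 2 ≤ K) (γ : Fin K → ℝ) {x : Fin (K - 1) → ℝ}
    (hx : x ∈ simplexCoords K) : 0 < dw γ x :=
  Finset.prod_pos fun k _ => Real.rpow_pos_of_pos ((fullProb_mem hK hx).1 k) _

theorem dw_lintegral {K : ℕ} (hK : 2 ≤ K) {γ : Fin K → ℝ} (hγ : ∀ k, 0 < γ k) :
    ∫⁻ x in simplexCoords K, ENNReal.ofReal (dw γ x) = ENNReal.ofReal (multiBeta γ) := by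
  obtain ⟨n, rfl⟩ : ∃ n, K = n + 1 := ⟨K - 1, by omega⟩
  have h := dirW_lintegral n (fun i => γ i.castSucc) (γ (Fin.last n)) 1 (fun i => hγ _) (hγ _)
    one_pos
  rw [Real.one_rpow, one_mul, ← Fin.sum_univ_castSucc,
    ← Fin.prod_univ_castSucc (fun i => Real.Gamma (γ i))] at h
  rw [multiBeta, ← h, ← lintegral_indicator (simplexCoords_meas _)]
  refine lintegral_congr fun x => ?_
  by_cases hx : x ∈ simplexCoords (n + 1)
  · have hx' : (∀ i : Fin n, 0 < x i) ∧ ∑ i : Fin n, x i < 1 := hx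
    rw [Set.indicator_of_mem hx, dirW, if_pos hx', dw, Fin.prod_univ_castSucc]
    simp [fullProb]
  · have hx' : ¬ ((∀ i : Fin n, 0 < x i) ∧ ∑ i : Fin n, x i < 1) := hx
    rw [Set.indicator_of_notMem hx, dirW, if_neg hx', ENNReal.ofReal_zero]

theorem dw_integrable {K : ℕ} (hK : 2 ≤ K) {γ : Fin K → ℝ} (hγ : ∀ k, 0 < γ k) :
    IntegrableOn (dw γ) (simplexCoords K) := by
  refine ⟨(dw_meas γ).aestronglyMeasurable, ?_⟩
  rw [hasFiniteIntegral_iff_ofReal, dw_lintegral hK hγ]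
  · exact ENNReal.ofReal_lt_top
  · exact (ae_restrict_mem (simplexCoords_meas K)).mono fun x hx => (dw_pos hK γ hx).le

theorem dw_integral {K : ℕ} (hK : 2 ≤ K) {γ : Fin K → ℝ} (hγ : ∀ k, 0 < γ k) :
    ∫ x in simplexCoords K, dw γ x = multiBeta γ := by
  rw [integral_eq_lintegral_of_nonneg_ae, dw_lintegral hK hγ,
    ENNReal.toReal_ofReal (multiBeta_pos hK hγ).le]
  · exact (ae_restrict_mem (simplexCoords_meas K)).mono fun x hx => (dw_pos hK γ hx).le
  · exact (dw_meas γ).aestronglyMeasurable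

theorem log_gap {f g : ℝ} (hf : 0 < f) (hg : 0 < g) :
    (g - f) ^ 2 / (f + g) ≤ (g - f) * Real.log (g / f) := by
  have h1 := Real.one_sub_inv_le_log_of_pos (div_pos hg hf)
  have h2 := Real.log_le_sub_one_of_pos (div_pos hg hf)
  rw [inv_div] at h1
  have e1 : 1 - f / g = (g - f) / g := by field_simp
  have e2 : g / f - 1 = (g - f) / f := by field_simp
  rw [e1] at h1
  rw [e2] at h2
  rcases le_total f g with h | h
  · calc (g - f) ^ 2 / (f + g) ≤ (g - f) ^ 2 / g := by
          apply div_le_div_of_nonneg_left (sq_nonneg _) hg; linarith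
      _ = (g - f) * ((g - f) / g) := by ring
      _ ≤ _ := mul_le_mul_of_nonneg_left h1 (by linarith)
  · calc (g - f) ^ 2 / (f + g) ≤ (g - f) ^ 2 / f := by
          apply div_le_div_of_nonneg_left (sq_nonneg _) hf; linarith
      _ = (g - f) * ((g - f) / f) := by ring
      _ ≤ _ := mul_le_mul_of_nonpos_left h2 (by linarith)

theorem ptwise {f g t c : ℝ} (hf : 0 < f) (hg : 0 < g) (ht : 0 < t) (hc : 0 < c) :
    |f - g| ≤ c / 2 * ((g * (g / f) ^ t + f * (g / f) ^ (-t) - g - f) / t) + (f + g) / (2 * c) := by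
  have hr : 0 < g / f := div_pos hg hf
  have l1 : Real.log (g / f) ≤ ((g / f) ^ t - 1) / t := by
    rw [le_div_iff₀ ht, mul_comm, ← Real.log_rpow hr]
    exact Real.log_le_sub_one_of_pos (Real.rpow_pos_of_pos hr _)
  have l2 : -Real.log (g / f) ≤ ((g / f) ^ (-t) - 1) / t := by
    rw [le_div_iff₀ ht, show -Real.log (g / f) * t = (-t) * Real.log (g / f) by ring,
      ← Real.log_rpow hr]
    exact Real.log_le_sub_one_of_pos (Real.rpow_pos_of_pos hr _)
  have l3 := log_gap hf hg
  have l4 : (g - f) ^ 2 / (f + g) ≤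
      (g * (g / f) ^ t + f * (g / f) ^ (-t) - g - f) / t := by
    have m1 := mul_le_mul_of_nonneg_left l1 hg.le
    have m2 := mul_le_mul_of_nonneg_left l2 hf.le
    have : (g * (g / f) ^ t + f * (g / f) ^ (-t) - g - f) / t
      = g * (((g / f) ^ t - 1) / t) + f * (((g / f) ^ (-t) - 1) / t) := by ring
    rw [this]
    linarith
  have l5 : |f - g| ≤ c / 2 * ((g - f) ^ 2 / (f + g)) + (f + g) / (2 * c) := by
    have hs : 0 < f + g := by linarith
    have : c / 2 * ((g - f) ^ 2 / (f + g)) + (f + g) / (2 * c) - |f - g|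
        = (c * |f - g| - (f + g)) ^ 2 / (2 * c * (f + g)) := by
      rw [show (g - f) ^ 2 = |f - g| ^ 2 by rw [sq_abs]; ring]
      field_simp
      ring
    have h0 : 0 ≤ (c * |f - g| - (f + g)) ^ 2 / (2 * c * (f + g)) := by positivity
    linarith
  have := mul_le_mul_of_nonneg_left l4 (by positivity : 0 ≤ c / 2)
  linarith

theorem beta_deriv {K : ℕ} (hK : 2 ≤ K) {γ η : Fin K → ℝ} (hγ : ∀ k, 0 < γ k)
    (hη : ∑ k, η k = 0) :
    HasDerivAt (fun t : ℝ => multiBeta (fun k => γ k + t * η k))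
      (multiBeta γ * ∑ k, η k * digamma (γ k)) 0 := by
  have hs : ∀ t : ℝ, ∑ k, (γ k + t * η k) = ∑ k, γ k := by
    intro t
    rw [Finset.sum_add_distrib, ← Finset.mul_sum, hη, mul_zero, add_zero]
  unfold multiBeta
  simp_rw [hs]
  have h1 : ∀ k ∈ (Finset.univ : Finset (Fin K)),
      HasDerivAt (fun t : ℝ => Real.Gamma (γ k + t * η k)) (deriv Real.Gamma (γ k) * η k) 0 := by
    intro k _
    have hd : HasDerivAt Real.Gamma (deriv Real.Gamma (γ k)) (γ k + 0 * η k) := by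
      rw [zero_mul, add_zero]
      refine (Real.differentiableAt_Gamma fun m => ?_).hasDerivAt
      have := hγ k
      have : (0:ℝ) ≤ m := Nat.cast_nonneg m
      linarith
    have hl : HasDerivAt (fun t : ℝ => γ k + t * η k) (η k) 0 := by
      simpa using ((hasDerivAt_id (0:ℝ)).mul_const (η k)).const_add (γ k)
    exact HasDerivAt.comp (0:ℝ) hd hl
  have h2 := (HasDerivAt.fun_finsetProd h1).div_const (Real.Gamma (∑ k, γ k))
  refine h2.congr_deriv ?_
  rw [div_mul_eq_mul_div, Finset.mul_sum]
  congr 1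
  refine Finset.sum_congr rfl fun k _ => ?_
  simp only [zero_mul, add_zero, smul_eq_mul]
  rw [← Finset.mul_prod_erase _ _ (Finset.mem_univ k), digamma]
  have := (Real.Gamma_pos_of_pos (hγ k)).ne'
  field_simp

theorem ratio_pow {K : ℕ} (hK : 2 ≤ K) (γ γ' : Fin K → ℝ) {x : Fin (K - 1) → ℝ}
    (hx : x ∈ simplexCoords K) (t : ℝ) (δ : Fin K → ℝ) :
    dw δ x * (dw γ' x / dw γ x) ^ t = dw (fun k => δ k + t * (γ' k - γ k)) x := by
  unfold dw
  have hp := (fullProb_mem hK hx).1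
  rw [← Finset.prod_div_distrib, ← Real.finsetProd_rpow, ← Finset.prod_mul_distrib]
  · refine Finset.prod_congr rfl fun k _ => ?_
    rw [← Real.rpow_sub (hp k), ← Real.rpow_mul (hp k).le, ← Real.rpow_add (hp k)]
    congr 1
    ring
  · intro k _
    exact (div_pos (Real.rpow_pos_of_pos (hp k) _) (Real.rpow_pos_of_pos (hp k) _)).le

theorem dirichletPdf_eq {K : ℕ} (γ : Fin K → ℝ) (x : Fin (K - 1) → ℝ) :
    dirichletPdf γ x = 1 / multiBeta γ * dw γ x := rfl

theorem integral_lin4 {α : Type*} [MeasurableSpace α] {μ : Measure α} {f1 f2 f3 f4 : α → ℝ}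
    (h1 : Integrable f1 μ) (h2 : Integrable f2 μ) (h3 : Integrable f3 μ) (h4 : Integrable f4 μ)
    (a1 a2 a3 a4 : ℝ) :
    ∫ x, (a1 * f1 x + a2 * f2 x + a3 * f3 x + a4 * f4 x) ∂μ
      = a1 * ∫ x, f1 x ∂μ + a2 * ∫ x, f2 x ∂μ + a3 * ∫ x, f3 x ∂μ + a4 * ∫ x, f4 x ∂μ := by
  have g1 := h1.const_mul a1
  have g2 := h2.const_mul a2
  have g3 := h3.const_mul a3
  have g4 := h4.const_mul a4
  have g12 : Integrable (fun x => a1 * f1 x + a2 * f2 x) μ := g1.add g2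
  have g123 : Integrable (fun x => a1 * f1 x + a2 * f2 x + a3 * f3 x) μ := g12.add g3
  rw [integral_add g123 g4, integral_add g12 g3, integral_add g1 g2]
  simp only [integral_const_mul]

theorem I_bound_t {K : ℕ} (hK : 2 ≤ K) {γ γ' : Fin K → ℝ} (hγ : ∀ k, 0 < γ k)
    (hγ' : ∀ k, 0 < γ' k) {t c : ℝ} (ht : 0 < t) (hc : 0 < c)
    (h1 : ∀ k, 0 < γ' k + t * (γ' k - γ k)) (h2 : ∀ k, 0 < γ k + (-t) * (γ' k - γ k)) :
    ∫ x in simplexCoords K, |dirichletPdf γ x - dirichletPdf γ' x| ≤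
      c / 2 * ((multiBeta (fun k => γ' k + t * (γ' k - γ k)) / multiBeta γ' *
          (multiBeta γ / multiBeta γ') ^ t
        + multiBeta (fun k => γ k + (-t) * (γ' k - γ k)) / multiBeta γ *
          (multiBeta γ / multiBeta γ') ^ (-t) - 1 - 1) / t) + 1 / c := by
  have b := multiBeta_pos hK hγ
  have b' := multiBeta_pos hK hγ'
  set r := multiBeta γ / multiBeta γ' with hr
  have r0 : 0 < r := div_pos b b'
  have i0 := dw_integrable hK hγ
  have i0' := dw_integrable hK hγ'
  have i1 := dw_integrable hK h1
  have i2 := dw_integrable hK h2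
  have e0 := dw_integral hK hγ
  have e0' := dw_integral hK hγ'
  have e1 := dw_integral hK h1
  have e2 := dw_integral hK h2
  set d1 := dw (fun k => γ' k + t * (γ' k - γ k)) with hd1
  set d2 := dw (fun k => γ k + (-t) * (γ' k - γ k)) with hd2
  set b1 := multiBeta (fun k => γ' k + t * (γ' k - γ k)) with hb1
  set b2 := multiBeta (fun k => γ k + (-t) * (γ' k - γ k)) with hb2
  have hle : ∫ x in simplexCoords K, |dirichletPdf γ x - dirichletPdf γ' x| ≤
      ∫ x in simplexCoords K, ((c / 2 / t * (1 / multiBeta γ' * r ^ t)) * d1 x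
        + (c / 2 / t * (1 / multiBeta γ * r ^ (-t))) * d2 x
        + ((1 / (2 * c) - c / 2 / t) * (1 / multiBeta γ')) * dw γ' x
        + ((1 / (2 * c) - c / 2 / t) * (1 / multiBeta γ)) * dw γ x) := by
    apply setIntegral_mono_on
    · simp_rw [dirichletPdf_eq]
      exact ((i0.const_mul _).sub (i0'.const_mul _)).abs
    · exact (((i1.const_mul _).add (i2.const_mul _)).add (i0'.const_mul _)).add (i0.const_mul _)
    · exact simplexCoords_meas K
    · intro x hx
      have w := dw_pos hK γ hx
      have w' := dw_pos hK γ' hx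
      have hp := ptwise (f := dirichletPdf γ x) (g := dirichletPdf γ' x)
        (by rw [dirichletPdf_eq]; positivity) (by rw [dirichletPdf_eq]; positivity) ht hc
      refine hp.trans (le_of_eq ?_)
      rw [dirichletPdf_eq, dirichletPdf_eq]
      have er : (1 / multiBeta γ' * dw γ' x) / (1 / multiBeta γ * dw γ x)
          = r * (dw γ' x / dw γ x) := by rw [hr]; field_simp
      rw [er, Real.mul_rpow r0.le (div_pos w' w).le, Real.mul_rpow r0.le (div_pos w' w).le,
        hd1, hd2, ← ratio_pow hK γ γ' hx, ← ratio_pow hK γ γ' hx]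
      field_simp
      ring
  refine hle.trans (le_of_eq ?_)
  rw [integral_lin4 i1 i2 i0' i0]
  rw [e0, e0', e1, e2]
  field_simp
  ring

theorem I_bound {K : ℕ} (hK : 2 ≤ K) {γ γ' : Fin K → ℝ} (hγ : ∀ k, 0 < γ k)
    (hγ' : ∀ k, 0 < γ' k) (hs : ∑ k, γ k = ∑ k, γ' k) {c : ℝ} (hc : 0 < c) :
    ∫ x in simplexCoords K, |dirichletPdf γ x - dirichletPdf γ' x| ≤
      c / 2 * (∑ k, (γ' k - γ k) * (digamma (γ' k) - digamma (γ k))) + 1 / c := by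
  have b := multiBeta_pos hK hγ
  have b' := multiBeta_pos hK hγ'
  have hη : ∑ k, (γ' k - γ k) = 0 := by rw [Finset.sum_sub_distrib, hs, sub_self]
  set r := multiBeta γ / multiBeta γ' with hr
  have r0 : 0 < r := div_pos b b'
  let H : ℝ → ℝ := fun t => multiBeta (fun k => γ' k + t * (γ' k - γ k)) / multiBeta γ' * r ^ t
        + multiBeta (fun k => γ k + (-t) * (γ' k - γ k)) / multiBeta γ * r ^ (-t)
  have hd1 := beta_deriv hK hγ' hη
  have hd2 : HasDerivAt (fun t : ℝ => multiBeta (fun k => γ k + (-t) * (γ' k - γ k)))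
      (-(multiBeta γ * ∑ k, (γ' k - γ k) * digamma (γ k))) 0 := by
    have h := beta_deriv hK hγ hη
    rw [← neg_zero] at h
    have := HasDerivAt.comp (0:ℝ) h (hasDerivAt_neg (0:ℝ))
    simpa [Function.comp_def] using this
  have hp1 : HasDerivAt (fun t : ℝ => r ^ t) (Real.log r) 0 := by
    simpa using (Real.hasStrictDerivAt_const_rpow r0 0).hasDerivAt
  have hp2 : HasDerivAt (fun t : ℝ => r ^ (-t)) (-Real.log r) 0 := by
    have h := hp1
    rw [← neg_zero] at h
    simpa [Function.comp_def] using HasDerivAt.comp (0:ℝ) h (hasDerivAt_neg (0:ℝ))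
  have hH : HasDerivAt H (∑ k, (γ' k - γ k) * (digamma (γ' k) - digamma (γ k))) 0 := by
    refine (((hd1.div_const _).mul hp1).add ((hd2.div_const _).mul hp2)).congr_deriv ?_
    simp only [zero_mul, add_zero, neg_zero, Real.rpow_zero, mul_sub, Finset.sum_sub_distrib]
    field_simp
    ring
  have hH0 : H 0 = 2 := by
    simp only [H, zero_mul, add_zero, neg_zero, Real.rpow_zero]
    rw [div_self b.ne', div_self b'.ne']
    norm_num
  have hsl := hH.tendsto_slope_zero_right
  have hpos : ∀ᶠ t : ℝ in nhdsWithin 0 (Set.Ioi 0),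
      (∀ k, 0 < γ' k + t * (γ' k - γ k)) ∧ (∀ k, 0 < γ k + (-t) * (γ' k - γ k)) := by
    apply Filter.Eventually.filter_mono nhdsWithin_le_nhds
    rw [Filter.eventually_and, Filter.eventually_all, Filter.eventually_all]
    constructor
    · intro k
      have hc : ContinuousAt (fun t : ℝ => γ' k + t * (γ' k - γ k)) 0 := by fun_prop
      exact hc.eventually_const_lt (by simpa using hγ' k)
    · intro k
      have hc : ContinuousAt (fun t : ℝ => γ k + (-t) * (γ' k - γ k)) 0 := by fun_prop
      exact hc.eventually_const_lt (by simpa using hγ k)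
  refine ge_of_tendsto ((hsl.const_mul (c / 2)).add_const (1 / c)) ?_
  filter_upwards [hpos, self_mem_nhdsWithin] with t h ht
  refine (I_bound_t hK hγ hγ' ht hc h.1 h.2).trans (le_of_eq ?_)
  rw [hH0, zero_add, smul_eq_mul]
  simp only [H, ← hr]
  field_simp
  ring

theorem sigmaT_pos (T x : ℝ) : 0 < sigmaT T x := by
  unfold sigmaT
  positivity

theorem sigmaT_add (T x : ℝ) : sigmaT T x + sigmaT T (-x) = 1 := by
  unfold sigmaT
  rw [neg_neg, neg_div, Real.exp_neg]
  have := Real.exp_pos (x / T)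
  field_simp
  ring

theorem dsKernel_pos (K : ℕ) (T q : ℝ) (p : Fin K → ℝ) (b : Fin K → Bool) :
    0 < dsKernel K T q p b := Finset.prod_pos fun _ _ => sigmaT_pos _ _

theorem dsKernel_sum (K : ℕ) (T q : ℝ) (p : Fin K → ℝ) : ∑ b, dsKernel K T q p b = 1 := by
  unfold dsKernel
  have h := Finset.prod_univ_sum (fun _ : Fin K => (Finset.univ : Finset Bool))
    (fun k b => sigmaT T ((2 * (if b then (1 : ℝ) else 0) - 1) * (p k - q)))
  rw [Fintype.piFinset_univ] at h
  rw [← h]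
  refine Finset.prod_eq_one fun k _ => ?_
  rw [Fintype.sum_bool]
  have := sigmaT_add T (p k - q)
  norm_num
  rw [← this]
  ring_nf

theorem dsKernel_le_one (K : ℕ) (T q : ℝ) (p : Fin K → ℝ) (b : Fin K → Bool) :
    dsKernel K T q p b ≤ 1 := by
  rw [← dsKernel_sum K T q p]
  exact Finset.single_le_sum (fun b _ => (dsKernel_pos K T q p b).le) (Finset.mem_univ b)

theorem tv_le_one (K : ℕ) (T q : ℝ) (p p' : Fin K → ℝ) :
    1 / 2 * ∑ b : Fin K → Bool, |dsKernel K T q p b - dsKernel K T q p' b| ≤ 1 := by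
  have : ∑ b : Fin K → Bool, |dsKernel K T q p b - dsKernel K T q p' b| ≤
      ∑ b : Fin K → Bool, (dsKernel K T q p b + dsKernel K T q p' b) := by
    refine Finset.sum_le_sum fun b _ => ?_
    rw [abs_le]
    constructor <;> linarith [dsKernel_pos K T q p b, dsKernel_pos K T q p' b]
  rw [Finset.sum_add_distrib, dsKernel_sum, dsKernel_sum] at this
  linarith

theorem deltaSq_le_one (K : ℕ) (T q : ℝ) : deltaSq K T q ≤ 1 :=
  Real.iSup_le (fun p => Real.iSup_le (fun p' => tv_le_one K T q p p') zero_le_one) zero_le_one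

theorem le_deltaSq (K : ℕ) (T q : ℝ) (p p' : probSimplex K) :
    1 / 2 * ∑ b : Fin K → Bool, |dsKernel K T q p b - dsKernel K T q p' b| ≤ deltaSq K T q := by
  have h1 : BddAbove (Set.range fun p' : probSimplex K =>
      1 / 2 * ∑ b : Fin K → Bool, |dsKernel K T q p b - dsKernel K T q p' b|) :=
    ⟨1, by rintro _ ⟨p', rfl⟩; exact tv_le_one K T q p p'⟩
  have h2 : BddAbove (Set.range fun p : probSimplex K => ⨆ p' : probSimplex K,
      1 / 2 * ∑ b : Fin K → Bool, |dsKernel K T q p b - dsKernel K T q p' b|) :=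
    ⟨1, by
      rintro _ ⟨p, rfl⟩
      exact Real.iSup_le (fun p' => tv_le_one K T q p p') zero_le_one⟩
  exact (le_ciSup h1 p').trans (le_ciSup h2 p)

theorem deltaSq_nonneg (K : ℕ) (T q : ℝ) : 0 ≤ deltaSq K T q :=
  Real.iSup_nonneg fun p => Real.iSup_nonneg fun p' => by positivity

theorem sum_sub_le (K : ℕ) (T q : ℝ) (p p' : probSimplex K) (B : Finset (Fin K → Bool)) :
    ∑ b ∈ B, dsKernel K T q p b - ∑ b ∈ B, dsKernel K T q p' b ≤ deltaSq K T q := by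
  refine le_trans ?_ (le_deltaSq K T q p p')
  have h0 : ∑ b, (dsKernel K T q p b - dsKernel K T q p' b) = 0 := by
    rw [Finset.sum_sub_distrib, dsKernel_sum, dsKernel_sum, sub_self]
  have h1 := Finset.sum_add_sum_compl B (fun b => dsKernel K T q p b - dsKernel K T q p' b)
  have h2 := Finset.sum_add_sum_compl B (fun b => |dsKernel K T q p b - dsKernel K T q p' b|)
  have h3 := Finset.sum_le_sum (s := B)
    (fun b _ => le_abs_self (dsKernel K T q p b - dsKernel K T q p' b))
  have h4 := Finset.sum_le_sum (s := Bᶜ)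
    (fun b _ => neg_abs_le (dsKernel K T q p b - dsKernel K T q p' b))
  rw [Finset.sum_neg_distrib] at h4
  rw [← Finset.sum_sub_distrib]
  linarith

theorem dsKernel_meas (K : ℕ) (T q : ℝ) (b : Fin K → Bool) :
    Measurable (fun x => dsKernel K T q (fullProb K x) b) := by
  unfold dsKernel sigmaT
  refine Finset.measurable_prod _ fun k _ => ?_
  have := fullProb_meas K k
  fun_prop

theorem pdf_integrable {K : ℕ} (hK : 2 ≤ K) {γ : Fin K → ℝ} (hγ : ∀ k, 0 < γ k) :
    IntegrableOn (dirichletPdf γ) (simplexCoords K) :=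
  (dw_integrable hK hγ).const_mul _

theorem pdf_integral {K : ℕ} (hK : 2 ≤ K) {γ : Fin K → ℝ} (hγ : ∀ k, 0 < γ k) :
    ∫ x in simplexCoords K, dirichletPdf γ x = 1 := by
  simp_rw [dirichletPdf_eq]
  rw [integral_const_mul, dw_integral hK hγ, one_div, inv_mul_cancel₀ (multiBeta_pos hK hγ).ne']

theorem ker_pdf_integrable {K : ℕ} (hK : 2 ≤ K) {γ : Fin K → ℝ} (hγ : ∀ k, 0 < γ k) (T q : ℝ)
    (b : Fin K → Bool) :
    IntegrableOn (fun x => dsKernel K T q (fullProb K x) b * dirichletPdf γ x)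
      (simplexCoords K) := by
  refine (pdf_integrable hK hγ).bdd_mul (c := 1) (dsKernel_meas K T q b).aestronglyMeasurable ?_
  refine Filter.Eventually.of_forall fun x => ?_
  rw [Real.norm_of_nonneg (dsKernel_pos _ _ _ _ _).le]
  exact dsKernel_le_one _ _ _ _ _

theorem nu_bound {K : ℕ} (hK : 2 ≤ K) {γ γ' : Fin K → ℝ} (hγ : ∀ k, 0 < γ k)
    (hγ' : ∀ k, 0 < γ' k) (T q : ℝ) (B : Finset (Fin K → Bool)) :
    (∑ b ∈ B, ∫ x in simplexCoords K, dsKernel K T q (fullProb K x) b * dirichletPdf γ x)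
      - ∑ b ∈ B, ∫ x in simplexCoords K, dsKernel K T q (fullProb K x) b * dirichletPdf γ' x
      ≤ deltaSq K T q *
        ((∫ x in simplexCoords K, |dirichletPdf γ x - dirichletPdf γ' x|) / 2) := by
  have i := pdf_integrable hK hγ
  have i' := pdf_integrable hK hγ'
  have hd0 := deltaSq_nonneg K T q
  set D := deltaSq K T q with hD
  rw [← integral_finsetSum _ (fun b _ => ker_pdf_integrable hK hγ T q b),
    ← integral_finsetSum _ (fun b _ => ker_pdf_integrable hK hγ' T q b),
    ← integral_sub (integrable_finsetSum _ (fun b _ => ker_pdf_integrable hK hγ T q b))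
      (integrable_finsetSum _ (fun b _ => ker_pdf_integrable hK hγ' T q b))]
  obtain ⟨m, hm⟩ : ∃ m : ℝ, ∀ p : probSimplex K, m ≤ ∑ b ∈ B, dsKernel K T q p b ∧
      ∑ b ∈ B, dsKernel K T q p b ≤ m + D := by
    refine ⟨⨅ p : probSimplex K, ∑ b ∈ B, dsKernel K T q p b, fun p => ⟨?_, ?_⟩⟩
    · refine ciInf_le ⟨0, ?_⟩ p
      rintro _ ⟨p', rfl⟩
      exact Finset.sum_nonneg fun b _ => (dsKernel_pos _ _ _ _ _).le
    · have : Nonempty (probSimplex K) := ⟨p⟩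
      have := le_ciInf (f := fun p : probSimplex K => ∑ b ∈ B, dsKernel K T q p b)
        (c := ∑ b ∈ B, dsKernel K T q p b - D)
        (fun p' => by linarith [sum_sub_le K T q p p' B])
      linarith
  have hle : ∫ x in simplexCoords K, (∑ b ∈ B, dsKernel K T q (fullProb K x) b * dirichletPdf γ x
      - ∑ b ∈ B, dsKernel K T q (fullProb K x) b * dirichletPdf γ' x) ≤
      ∫ x in simplexCoords K, (0 * dirichletPdf γ x + (m + D / 2) * dirichletPdf γ x
        + (-(m + D / 2)) * dirichletPdf γ' x
        + D / 2 * |dirichletPdf γ x - dirichletPdf γ' x|) := by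
    apply setIntegral_mono_on
    · exact (integrable_finsetSum _ (fun b _ => ker_pdf_integrable hK hγ T q b)).sub
        (integrable_finsetSum _ (fun b _ => ker_pdf_integrable hK hγ' T q b))
    · exact (((i.const_mul _).add (i.const_mul _)).add (i'.const_mul _)).add
        ((i.sub i').abs.const_mul _)
    · exact simplexCoords_meas K
    · intro x hx
      have h := hm ⟨_, fullProb_mem hK hx⟩
      simp only at h
      rw [← Finset.sum_mul, ← Finset.sum_mul]
      set f := dirichletPdf γ x
      set g := dirichletPdf γ' x
      set S := ∑ b ∈ B, dsKernel K T q (fullProb K x) b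
      rcases le_total g f with hfg | hfg
      · rw [abs_of_nonneg (by linarith)]
        nlinarith [mul_nonneg (sub_nonneg.2 h.2) (sub_nonneg.2 hfg)]
      · rw [abs_of_nonpos (by linarith)]
        nlinarith [mul_nonneg (sub_nonneg.2 h.1) (sub_nonneg.2 hfg)]
  refine hle.trans (le_of_eq ?_)
  have iab : Integrable (fun x => |dirichletPdf γ x - dirichletPdf γ' x|)
      (volume.restrict (simplexCoords K)) := (i.sub i').abs
  rw [integral_lin4 i i i' iab, pdf_integral hK hγ, pdf_integral hK hγ']
  ring

theorem opt_c {I J : ℝ} (h : ∀ c : ℝ, 0 < c → I ≤ c / 2 * J + 1 / c) :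
    I / 2 ≤ Real.sqrt J := by
  rcases le_or_gt J 0 with hJ | hJ
  · rw [Real.sqrt_eq_zero_of_nonpos hJ]
    by_contra hI
    push Not at hI
    have h1 := h (2 / I) (by apply div_pos <;> linarith)
    have hI' : 0 < I := by linarith
    have h2 : 2 / I / 2 * J ≤ 0 := mul_nonpos_of_nonneg_of_nonpos (by positivity) hJ
    rw [one_div_div] at h1
    linarith
  · have hs := Real.sqrt_pos.2 hJ
    have h1 := h (1 / Real.sqrt J) (by positivity)
    have h2 : 1 / Real.sqrt J / 2 * J = Real.sqrt J / 2 := by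
      nth_rw 2 [← Real.mul_self_sqrt hJ.le]
      field_simp
    rw [h2, one_div_one_div] at h1
    linarith

/-- Proposition 3 (decision-set disclosure): the advantage of the attacker observing
the randomized decision set is bounded by `δ_{T,q} · Adv^CV-ub`. -/
theorem stmt13 (K : ℕ) (hK : 2 ≤ K) (epsE Δ epsA : ℝ)
    (hεe : 0 < epsE) (hΔ : 0 ≤ Δ) (hεa₁ : Δ / (1 + Δ) < epsA) (hεa₂ : epsA < 1)
    (q T : ℝ) (hq : q ∈ Set.Ioo (0 : ℝ) 1) (hT : 0 < T)
    (νout νin : (Fin K → Bool) → ℝ)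
    (hνout : ∀ b, νout b = ∫ x in simplexCoords K,
        dsKernel K T q (fullProb K x) b * dirichletPdf (gammaOut K epsE epsA) x)
    (hνin : ∀ b, νin b = ∫ x in simplexCoords K,
        dsKernel K T q (fullProb K x) b * dirichletPdf (gammaIn K epsE Δ epsA) x)
    (B : Finset (Fin K → Bool)) :
    (∑ b ∈ B, νout b) - (∑ b ∈ B, νin b)
      ≤ Real.sqrt (deltaSq K T q) * AdvCVub Δ epsA epsE K := by
  have hΔ1 : 0 < 1 + Δ := by linarith
  have hA : 0 < epsA * (1 + Δ) - Δ := by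
    rw [div_lt_iff₀ hΔ1] at hεa₁
    linarith
  have hA0 : 0 < epsA := lt_of_le_of_lt (by positivity) hεa₁
  have hK1 : (0 : ℝ) < (K : ℝ) - 1 := by
    have : (2 : ℝ) ≤ K := by exact_mod_cast hK
    linarith
  have h1A : 0 < 1 - epsA := by linarith
  have hout : ∀ k, 0 < gammaOut K epsE epsA k := by
    intro k
    unfold gammaOut
    split_ifs <;> positivity
  have hin : ∀ k, 0 < gammaIn K epsE Δ epsA k := by
    intro k
    unfold gammaIn
    split_ifs <;> positivity
  have hsum : ∑ k, gammaOut K epsE epsA k = ∑ k, gammaIn K epsE Δ epsA k := by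
    obtain ⟨n, rfl⟩ : ∃ n, K = n + 1 := ⟨K - 1, by omega⟩
    push_cast at hK1
    rw [add_sub_cancel_right] at hK1
    simp only [gammaOut, gammaIn, Fin.sum_univ_succ, Fin.val_zero, Fin.val_succ, if_true,
      Nat.succ_ne_zero, if_false, Finset.sum_const, Finset.card_univ, Fintype.card_fin,
      nsmul_eq_mul, Nat.cast_add, Nat.cast_one, add_sub_cancel_right]
    field_simp
    ring
  have hJ : ∑ k, (gammaIn K epsE Δ epsA k - gammaOut K epsE epsA k) *
      (digamma (gammaIn K epsE Δ epsA k) - digamma (gammaOut K epsE epsA k)) =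
      (Δ * (1 - epsA) / epsE) *
    (digamma ((1 + Δ) * (1 - epsA) / epsE) - digamma ((1 - epsA) / epsE)
      + digamma (epsA / (((K : ℝ) - 1) * epsE))
      - digamma ((epsA * (1 + Δ) - Δ) / (((K : ℝ) - 1) * epsE))) := by
    obtain ⟨n, rfl⟩ : ∃ n, K = n + 1 := ⟨K - 1, by omega⟩
    push_cast at hK1
    rw [add_sub_cancel_right] at hK1
    simp only [gammaOut, gammaIn, Fin.sum_univ_succ, Fin.val_zero, Fin.val_succ, if_true,
      Nat.succ_ne_zero, if_false, Finset.sum_const, Finset.card_univ, Fintype.card_fin,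
      nsmul_eq_mul, Nat.cast_add, Nat.cast_one, add_sub_cancel_right]
    generalize digamma ((1 + Δ) * (1 - epsA) / epsE) = d1
    generalize digamma ((1 - epsA) / epsE) = d2
    generalize digamma (epsA / ((n : ℝ) * epsE)) = d3
    generalize digamma ((epsA * (1 + Δ) - Δ) / ((n : ℝ) * epsE)) = d4
    field_simp
    ring
  have hI := opt_c (fun c hc => I_bound hK hout hin hsum hc)
  rw [hJ] at hI
  have hb := nu_bound hK hout hin T q B
  simp only [hνout, hνin]
  refine hb.trans ?_
  have hd0 := deltaSq_nonneg K T q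
  have hd1 : deltaSq K T q ≤ Real.sqrt (deltaSq K T q) :=
    Real.le_sqrt_of_sq_le (by nlinarith [deltaSq_le_one K T q])
  refine mul_le_mul hd1 hI ?_ (Real.sqrt_nonneg _)
  exact div_nonneg (integral_nonneg fun x => abs_nonneg _) (by norm_num)
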